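/- Let G be a finite simple undirected graph and v a vertex of degree exactly 2 with distinct neighbors a and b, where a and b are not adjacent in G. Let G′ be the graph obtained from G by deleting v and adding the edge {a, b}. Then OPT(G) = OPT(G′); moreover, every feedback vertex set of G′ is a feedback vertex set of G (after noting v ∉ it), and from any feedback vertex set S of G one can obtain a feedback vertex set of G′ of size at most |S| (by replacing v with a if v ∈ S). -/

import Mathlib

/-- `U` is a feedback vertex set of `G`. -/
def IsFVS {V : Type*} (G : SimpleGraph V) (U : Set V) : Prop :=
  (G.induce (Uᶜ : Set V)).IsAcyclic

/-- Minimum size of a feedback vertex set of `G`. -/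
noncomputable def optFVS {V : Type*} (G : SimpleGraph V) : ℕ :=
  sInf {n | ∃ U : Set V, IsFVS G U ∧ U.ncard = n}

/-- `G` with all edges meeting `U` removed, on the same vertex type. -/
def cutG {V : Type*} (G : SimpleGraph V) (U : Set V) : SimpleGraph V where
  Adj x y := G.Adj x y ∧ x ∉ U ∧ y ∉ U
  symm := ⟨fun _ _ h => ⟨h.1.symm, h.2.2, h.2.1⟩⟩
  loopless := ⟨fun _ h => h.1.ne rfl⟩

theorem cutG_le {V : Type*} (G : SimpleGraph V) (U : Set V) : cutG G U ≤ G :=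
  fun _ _ h => h.1

theorem cutG_support {V : Type*} (G : SimpleGraph V) (U : Set V) {x y : V}
    (w : (cutG G U).Walk x y) (hw : ¬ w.Nil) : ∀ z ∈ w.support, z ∈ Uᶜ := by
  induction w with
  | nil => simp at hw
  | @cons p q r h t ih =>
    intro z hz
    rw [SimpleGraph.Walk.support_cons, List.mem_cons] at hz
    rcases hz with rfl | hz
    · exact h.2.1
    · cases t with
      | nil =>
        simp at hz
        subst hz
        exact h.2.2
      | cons h' t' => exact ih (by simp) z hz

theorem isFVS_iff_cutG {V : Type*} (G : SimpleGraph V) (U : Set V) :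
    IsFVS G U ↔ (cutG G U).IsAcyclic := by
  constructor
  · intro h x w hw
    have hs : ∀ z ∈ (w.mapLe (cutG_le G U)).support, z ∈ Uᶜ := by
      intro z hz
      rw [SimpleGraph.Walk.support_mapLe_eq_support] at hz
      exact cutG_support G U w hw.not_nil z hz
    have hc : (w.mapLe (cutG_le G U)).IsCycle := hw.mapLe _
    refine h ((w.mapLe (cutG_le G U)).induce _ hs) ?_
    rw [← SimpleGraph.Walk.map_isCycle_iff_of_injective
      (f := (SimpleGraph.Embedding.induce (G := G) (Uᶜ)).toHom) Subtype.val_injective]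
    rw [SimpleGraph.Walk.map_induce]
    exact hc
  · intro h
    refine SimpleGraph.IsAcyclic.comap (G' := cutG G U)
      ⟨fun x => x.1, ?_⟩ Subtype.val_injective h
    intro x y hxy
    exact ⟨hxy, x.2, y.2⟩

theorem isolated_not_reachable {V : Type*} {H : SimpleGraph V} {v b : V}
    (hv : ∀ y, ¬ H.Adj v y) (hb : b ≠ v) : ¬ H.Reachable v b := by
  rintro ⟨w⟩
  cases w with
  | nil => exact hb rfl
  | cons h t => exact hv _ h

theorem reachable_contract {V : Type*} {H : SimpleGraph V} {v a b : V}
    (hv : ∀ y, ¬ H.Adj v y) (hav : a ≠ v) (hbv : b ≠ v) :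
    (H ⊔ SimpleGraph.edge v a).Reachable v b ↔ H.Reachable a b := by
  classical
  constructor
  · have key : ∀ x y, (H ⊔ SimpleGraph.edge v a).Walk x y →
        H.Reachable (if x = v then a else x) (if y = v then a else y) := by
      intro x y w
      induction w with
      | nil => exact SimpleGraph.Reachable.refl _
      | @cons p q r h t ih =>
        refine SimpleGraph.Reachable.trans ?_ ih
        rw [SimpleGraph.sup_adj, SimpleGraph.edge_adj] at h
        rcases h with h | ⟨⟨rfl, rfl⟩ | ⟨rfl, rfl⟩, -⟩
        · have hp : p ≠ v := fun e => hv q (e ▸ h)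
          have hq : q ≠ v := fun e => hv p (e ▸ h.symm)
          simpa [hp, hq] using h.reachable
        · simp [hav]
        · simp [hav]
    rintro ⟨w⟩
    simpa [hbv] using key _ _ w
  · intro h
    have h1 : (H ⊔ SimpleGraph.edge v a).Adj v a := by
      simp [SimpleGraph.edge_adj, hav.symm]
    exact h1.reachable.trans (h.mono le_sup_left)

theorem suppress_core {V : Type*} {H : SimpleGraph V} {v a b : V}
    (hv : ∀ y, ¬ H.Adj v y) (hav : a ≠ v) (hbv : b ≠ v) (hab : a ≠ b) (hn : ¬ H.Adj a b) :
    (H ⊔ SimpleGraph.edge v a ⊔ SimpleGraph.edge v b).IsAcyclic ↔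
      (H ⊔ SimpleGraph.edge a b).IsAcyclic := by
  have h2 : ¬ (H ⊔ SimpleGraph.edge v a).Adj v b := by
    simp [SimpleGraph.edge_adj, hv, hab.symm, hbv]
  rw [SimpleGraph.isAcyclic_sup_fromEdgeSet_iff (u := v) (v := b),
    SimpleGraph.isAcyclic_sup_fromEdgeSet_iff (u := a) (v := b),
    SimpleGraph.isAcyclic_add_edge_iff_of_not_reachable _ _ (isolated_not_reachable hv hav),
    reachable_contract hv hav hbv]
  simp [h2, hn, hab, hbv.symm]

theorem suppress_fvs {V : Type*} (G G' : SimpleGraph V) (v a b : V)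
    (hab : a ≠ b) (hav : a ≠ v) (hbv : b ≠ v)
    (hN : ∀ y, G.Adj v y ↔ y = a ∨ y = b) (hnadj : ¬ G.Adj a b)
    (hG' : ∀ x y, G'.Adj x y ↔
      (G.Adj x y ∧ x ≠ v ∧ y ≠ v) ∨ (x = a ∧ y = b) ∨ (x = b ∧ y = a))
    (S : Set V) (hvS : v ∉ S) : IsFVS G S ↔ IsFVS G' S := by
  have hN' : ∀ y, G.Adj y v ↔ y = a ∨ y = b := fun y => by rw [G.adj_comm, hN]
  rw [isFVS_iff_cutG, isFVS_iff_cutG]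
  have hv : ∀ y, ¬ (cutG G (insert v S)).Adj v y := fun y h => h.2.1 (Set.mem_insert _ _)
  by_cases h : a ∉ S ∧ b ∉ S
  · obtain ⟨haS, hbS⟩ := h
    have e1 : cutG G S =
        cutG G (insert v S) ⊔ SimpleGraph.edge v a ⊔ SimpleGraph.edge v b := by
      ext x y
      simp only [SimpleGraph.sup_adj, SimpleGraph.edge_adj, cutG, Set.mem_insert_iff]
      grind
    have e2 : cutG G' S = cutG G (insert v S) ⊔ SimpleGraph.edge a b := by
      ext x y
      simp only [SimpleGraph.sup_adj, SimpleGraph.edge_adj, cutG, Set.mem_insert_iff]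
      grind
    rw [e1, e2]
    exact suppress_core hv hav hbv hab (fun h => hnadj h.1)
  · have e2 : cutG G' S = cutG G (insert v S) := by
      ext x y
      simp only [cutG, Set.mem_insert_iff]
      grind
    rw [e2]
    constructor
    · intro hA
      refine hA.anti ?_
      intro x y hxy
      simp only [cutG, Set.mem_insert_iff] at hxy ⊢
      grind
    · intro hA
      by_cases haS : a ∈ S
      · refine (SimpleGraph.IsAcyclic.sup_edge_of_not_reachable
          (isolated_not_reachable hv hbv) hA).anti ?_
        intro x y
        simp only [SimpleGraph.sup_adj, SimpleGraph.edge_adj, cutG, Set.mem_insert_iff]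
        grind
      · refine (SimpleGraph.IsAcyclic.sup_edge_of_not_reachable
          (isolated_not_reachable hv hav) hA).anti ?_
        intro x y
        simp only [SimpleGraph.sup_adj, SimpleGraph.edge_adj, cutG, Set.mem_insert_iff]
        grind

theorem optFVS_le {V : Type*} (G : SimpleGraph V) (U : Set V) (h : IsFVS G U) :
    optFVS G ≤ U.ncard := Nat.sInf_le ⟨U, h, rfl⟩

theorem optFVS_exists {V : Type*} (G : SimpleGraph V) :
    ∃ U : Set V, IsFVS G U ∧ U.ncard = optFVS G := by
  have : {n | ∃ U : Set V, IsFVS G U ∧ U.ncard = n}.Nonempty := by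
    refine ⟨_, Set.univ, ?_, rfl⟩
    rw [isFVS_iff_cutG]
    have e : cutG G Set.univ = ⊥ := by
      ext x y
      simp [cutG]
    rw [e]
    exact SimpleGraph.isAcyclic_bot
  exact Nat.sInf_mem this

/-- Degree-two suppression rule: let `v` have degree exactly 2 with distinct nonadjacent
neighbors `a, b`, and let `G'` be obtained from `G` by deleting `v` and adding edge `{a,b}`.
Then `OPT(G) = OPT(G')`; every FVS of `G'` not containing `v` is an FVS of `G`; and from
any FVS `S` of `G` one obtains an FVS of `G'` of size at most `|S|`. -/
theorem degree_two_suppression {V : Type*} [Fintype V] [DecidableEq V]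
    (G G' : SimpleGraph V) [DecidableRel G.Adj] (v a b : V)
    (hdeg : G.degree v = 2) (hab : a ≠ b) (hav : a ≠ v) (hbv : b ≠ v)
    (hva : G.Adj v a) (hvb : G.Adj v b) (hnadj : ¬ G.Adj a b)
    (hG' : ∀ x y, G'.Adj x y ↔
      (G.Adj x y ∧ x ≠ v ∧ y ≠ v) ∨ (x = a ∧ y = b) ∨ (x = b ∧ y = a)) :
    optFVS G = optFVS G' ∧
    (∀ S : Set V, v ∉ S → IsFVS G' S → IsFVS G S) ∧
    (∀ S : Set V, IsFVS G S → ∃ T : Set V, IsFVS G' T ∧ T.ncard ≤ S.ncard) := by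
  have hN : ∀ y, G.Adj v y ↔ y = a ∨ y = b := by
    have hs : ({a, b} : Finset V) = G.neighborFinset v := by
      apply Finset.eq_of_subset_of_card_le
      · intro x hx
        simp only [Finset.mem_insert, Finset.mem_singleton] at hx
        rw [SimpleGraph.mem_neighborFinset]
        rcases hx with rfl | rfl <;> assumption
      · rw [SimpleGraph.card_neighborFinset_eq_degree, hdeg, Finset.card_pair hab]
    intro y
    rw [← SimpleGraph.mem_neighborFinset, ← hs]
    simp
  have core := suppress_fvs G G' v a b hab hav hbv hN hnadj hG'
  have third : ∀ S : Set V, IsFVS G S → ∃ T : Set V, IsFVS G' T ∧ T.ncard ≤ S.ncard := by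
    intro S hS
    by_cases hvS : v ∈ S
    · refine ⟨insert a (S \ {v}), ?_, ?_⟩
      · rw [isFVS_iff_cutG] at hS ⊢
        refine hS.anti ?_
        intro x y hxy
        simp only [cutG, Set.mem_insert_iff, Set.mem_diff, Set.mem_singleton_iff] at hxy ⊢
        grind
      · refine (Set.ncard_insert_le _ _).trans ?_
        rw [Set.ncard_diff_singleton_add_one hvS]
    · exact ⟨S, (core S hvS).1 hS, le_rfl⟩
  refine ⟨le_antisymm ?_ ?_, fun S hvS h => (core S hvS).2 h, third⟩
  · obtain ⟨U, hU, hc⟩ := optFVS_exists G'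
    rw [← hc]
    have hU' : IsFVS G' (U \ {v}) := by
      rw [isFVS_iff_cutG] at hU ⊢
      refine hU.anti ?_
      intro x y hxy
      simp only [cutG, Set.mem_diff, Set.mem_singleton_iff] at hxy ⊢
      grind
    exact (optFVS_le G _ ((core _ (by simp)).2 hU')).trans
      (Set.ncard_le_ncard Set.diff_subset)
  · obtain ⟨U, hU, hc⟩ := optFVS_exists G
    rw [← hc]
    obtain ⟨T, hT, hle⟩ := third U hU
    exact (optFVS_le G' T hT).trans hle
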